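/- Let (n,u) be one of the pairs in E = {(8,-5),(8,-6),(9,-5),(9,-6),(16,-9),(16,-10),(24,-13),(24,-14),(25,-13),(25,-14),(32,-17),(32,-18)}, and set α = u + 1/2. Then the generalised Laguerre polynomial L_n^{(α)}(x) is irreducible over ℚ and the Galois group of its splitting field over ℚ is isomorphic to the alternating group A_n on n letters. -/

import Mathlib

open Polynomial Finset

/-- The generalised Laguerre polynomial `L_n^{(α)}(x)` with `α = u + 1/2`, as a polynomial
over `ℚ`:  `L_n^{(α)}(x) = (-1)^n ∑_{j=0}^n C(n+α, n-j) (-x)^j / j!`, where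
`C(n+α, n-j) = (∏_{i=j+1}^n (α+i))/(n-j)!`. -/
noncomputable def laguerre (n : ℕ) (u : ℤ) : Polynomial ℚ :=
  (-1 : ℚ) ^ n •
    ∑ j ∈ Finset.range (n + 1),
      Polynomial.C ((∏ i ∈ Finset.Icc (j + 1) n, ((u : ℚ) + 1 / 2 + (i : ℚ))) /
          ((Nat.factorial (n - j) : ℚ) * (Nat.factorial j : ℚ))) * (-Polynomial.X) ^ j

/-- The exceptional set of pairs `(n, u)`. -/
def exceptionalSet : Set (ℤ × ℤ) :=
  {(8, -5), (8, -6), (9, -5), (9, -6), (16, -9), (16, -10), (24, -13), (24, -14),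
    (25, -13), (25, -14), (32, -17), (32, -18)}

/-!
Up to a linear substitution and a constant, the polynomial is monic with integral coefficients `c`.
An edge of one of its `p`-adic Newton polygons whose slope has denominator `m` in lowest terms is
divided among the factors of a factorisation into pieces whose lengths are multiples of `m`, so a
factor of degree less than `m` contributes nothing to it and the cofactor has at least the length of
the edge as its degree (Dumas). Well-chosen edges exclude all proper factors except linear ones, and
these are excluded because there is no root modulo a suitable prime.

Over the splitting field, such an edge yields a root whose `p`-adic valuation is a fraction of
denominator `m`, so `m` divides a ramification index and hence the order of the Galois group. For a
prime `m = q` with `n / 2 < q ≤ n - 3` the group then contains a `q`-cycle; being transitive, it is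
primitive, and by a theorem of Jordan it contains `A_n`. It is contained in `A_n` because the
discriminant, computed from the three-term recurrence by Schur's method, is a square.
-/

section PrimeCycles

open Equiv Equiv.Perm MulAction Subgroup

theorem exists_conj_mem_zpowers {G : Type*} [Group G] [Finite G] {p : ℕ} [Fact p.Prime]
    (hG : ¬p ^ 2 ∣ Nat.card G) {a b : G} (ha : orderOf a = p) (hb : orderOf b = p) :
    ∃ c, c * a * c⁻¹ ∈ zpowers b := by
  have sylow_eq : ∀ x : G, orderOf x = p → ∃ P : Sylow p G, (P : Subgroup G) = zpowers x := by
    intro x hx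
    have hcard : Nat.card (zpowers x) = p := by rw [Nat.card_zpowers, hx]
    obtain ⟨P, hP⟩ := (IsPGroup.of_card (hcard.trans (pow_one p).symm)).exists_le_sylow
    obtain ⟨k, hk⟩ := IsPGroup.iff_card.mp P.isPGroup'
    have hk1 : k ≤ 1 := by
      by_contra! h
      exact hG ((pow_dvd_pow p h).trans (hk ▸ (P : Subgroup G).card_subgroup_dvd_card))
    refine ⟨P, (eq_of_le_of_card_ge hP ?_).symm⟩
    rw [hk, hcard]
    exact (Nat.pow_le_pow_right (Fact.out : p.Prime).pos hk1).trans_eq (pow_one p)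
  obtain ⟨P, hP⟩ := sylow_eq a ha
  obtain ⟨Q, hQ⟩ := sylow_eq b hb
  obtain ⟨c, hc⟩ := exists_smul_eq G P Q
  refine ⟨c, ?_⟩
  rw [← hQ, ← hc, Sylow.coe_subgroup_smul, hP]
  exact Subgroup.smul_mem_pointwise_smul _ (MulAut.conj c) _ (mem_zpowers a)

theorem commute_of_conj_mem_zpowers {G : Type*} [Group G] {g h k : G}
    (hh : h * g * h⁻¹ ∈ zpowers g) (hk : k * g * k⁻¹ ∈ zpowers g) :
    Commute (h⁻¹ * k⁻¹ * h * k) g := by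
  have semiconj : ∀ {x : G} {i : ℤ}, g ^ i = x * g * x⁻¹ → SemiconjBy x g (g ^ i) :=
    fun hi ↦ by rw [SemiconjBy, hi, inv_mul_cancel_right]
  obtain ⟨i, hi⟩ := hh
  obtain ⟨j, hj⟩ := hk
  have hkh : SemiconjBy (h * k) g (g ^ (i * j)) := by
    rw [zpow_mul]
    exact ((semiconj hi).zpow_right j).mul_left (semiconj hj)
  have hhk : SemiconjBy (k * h) g (g ^ (i * j)) := by
    rw [mul_comm, zpow_mul]
    exact ((semiconj hj).zpow_right i).mul_left (semiconj hi)
  have key := hhk.inv_symm_left.mul_left hkh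
  rwa [mul_inv_rev, ← mul_assoc] at key

theorem inv_mul_inv_mul_mul_mul_of_commute {G : Type*} [Group G] {a b x y : G} (hax : Commute a x)
    (hay : Commute a y) (hbx : Commute b x) (hby : Commute b y) :
    (a * x)⁻¹ * (b * y)⁻¹ * (a * x) * (b * y) =
      a⁻¹ * b⁻¹ * a * b * (x⁻¹ * y⁻¹ * x * y) := by
  rw [hax.mul_inv, hby.mul_inv, hbx.inv_inv.symm.mul_mul_mul_comm,
    (hax.symm.inv_left.mul_left hay.symm.inv_left).mul_mul_mul_comm,
    ((hbx.symm.inv_left.mul_left hby.symm.inv_left).mul_left hbx.symm).mul_mul_mul_comm]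

variable {α : Type*} [Fintype α] [DecidableEq α] {G : Subgroup (Perm α)} {g : Perm α}

theorem mem_zpowers_of_commute_of_support_subset (hg : g.IsCycle) {r : Perm α}
    (hr : Commute r g) (hs : r.support ⊆ g.support) : r ∈ zpowers g := by
  obtain ⟨hr', hmem⟩ := hg.commute_iff.mp hr
  rwa [ofSubtype_subtypePerm hr' fun x hx ↦ hs (mem_support.mpr hx)] at hmem

theorem exists_conj_mem_zpowers_of_support_subset {p : ℕ} [Fact p.Prime] (hp : orderOf g = p)
    (hcard : #g.support = p) (hg : g ∈ G) {f : Perm α} (hf : f ∈ G) (hfp : orderOf f = p)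
    (hs : f.support ⊆ g.support) :
    ∃ n ∈ G, n.support ⊆ g.support ∧ n * f * n⁻¹ ∈ zpowers g := by
  let φ : Perm g.support →* Perm α := ofSubtype
  have lift : ∀ x ∈ G, x.support ⊆ g.support → orderOf x = p →
      ∃ y : G.comap φ, φ y = x ∧ orderOf y = p := by
    intro x hx hxs hxp
    obtain ⟨y, rfl⟩ : x ∈ φ.range := mem_range_ofSubtype_iff.mpr hxs
    exact ⟨⟨y, hx⟩, rfl, by
      rwa [← orderOf_coe, ← orderOf_injective φ ofSubtype_injective]⟩
  obtain ⟨a, rfl, ha⟩ := lift f hf hs hfp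
  obtain ⟨b, hbg, hb⟩ := lift g hg subset_rfl hp
  have hsq : ¬p ^ 2 ∣ Nat.card (G.comap φ) := fun h ↦ by
    have hdvd : p ^ 2 ∣ p.factorial := by
      refine h.trans ((card_subgroup_dvd_card _).trans (dvd_of_eq ?_))
      rw [Nat.card_perm, Nat.card_eq_fintype_card, Fintype.card_coe, hcard]
    have hprime : p.Prime := Fact.out
    rw [sq, ← Nat.mul_factorial_pred hprime.ne_zero,
      Nat.mul_dvd_mul_iff_left hprime.pos, hprime.dvd_factorial] at hdvd
    have := hprime.pos
    omega
  obtain ⟨c, j, hj⟩ := exists_conj_mem_zpowers hsq ha hb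
  refine ⟨φ c, c.2, mem_range_ofSubtype_iff.mp ⟨_, rfl⟩, j, ?_⟩
  have := congrArg (fun x : G.comap φ ↦ φ x) hj
  simpa [← hbg] using this

theorem exists_disjoint_mul_mem {k : ℕ} [IsMultiplyPretransitive G α k]
    (hk : #g.supportᶜ = k) {p : ℕ} [Fact p.Prime] (hp : orderOf g = p)
    (hcard : #g.support = p) (hg : g ∈ G) {π : Perm α} (hπ : π.Disjoint g) :
    ∃ r, π * r ∈ G ∧ r.support ⊆ g.support ∧ r * g * r⁻¹ ∈ zpowers g := by
  have hfin : Fintype.card ↥g.supportᶜ = k := by rw [Fintype.card_coe, hk]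
  let e : Fin k ↪ α :=
    (Fintype.equivFinOfCardEq hfin).symm.toEmbedding.trans (Function.Embedding.subtype _)
  obtain ⟨⟨h, hh⟩, he⟩ := exists_smul_eq G e (e.trans π.toEmbedding)
  obtain ⟨r, rfl⟩ : ∃ r, h = π * r := ⟨π⁻¹ * h, by rw [mul_inv_cancel_left]⟩
  have hr : r.support ⊆ g.support := fun x hx ↦ by
    by_contra hx'
    have := DFunLike.congr_fun he (Fintype.equivFinOfCardEq hfin ⟨x, mem_compl.mpr hx'⟩)
    refine mem_support.mp hx (π.injective ?_)
    simpa [e, Function.Embedding.smul_apply] using this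
  have hf : (r * g * r⁻¹).support ⊆ g.support := by
    refine (support_mul_le _ _).trans (sup_le ((support_mul_le _ _).trans (sup_le hr le_rfl)) ?_)
    rwa [support_inv]
  have hcomm : ∀ {x : Perm α}, x.support ⊆ g.support → Commute π x := fun hx ↦
    (hπ.mono le_rfl hx).commute
  have hfG : r * g * r⁻¹ ∈ G := by
    convert mul_mem (mul_mem hh hg) (inv_mem hh) using 1
    rw [mul_inv_rev, ← mul_assoc, mul_assoc π, mul_assoc π, (hcomm hf).eq, mul_inv_cancel_right]
  obtain ⟨n, hn, hns, hnj⟩ := exists_conj_mem_zpowers_of_support_subset hp hcard hg hfG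
    (by rw [← hp]; exact (MulAut.conj r).orderOf_eq g) hf
  refine ⟨n * r, ?_, (support_mul_le _ _).trans (sup_le hns hr), ?_⟩
  · rw [← mul_assoc, (hcomm hns).eq, mul_assoc]
    exact mul_mem hn hh
  · rwa [mul_inv_rev, mul_assoc n, ← mul_assoc (n * _), mul_assoc n]

theorem mem_ofFixingSubgroup_compl_support {x : α} :
    x ∈ SubMulAction.ofFixingSubgroup G (g.support : Set α)ᶜ ↔ x ∈ g.support := by
  rw [SubMulAction.mem_ofFixingSubgroup_iff, Set.mem_compl_iff, not_not, mem_coe]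

theorem isPreprimitive_fixingSubgroup_of_isCycle_mem (hc : g.IsCycle) (hp : (#g.support).Prime)
    (hg : g ∈ G) :
    IsPreprimitive (fixingSubgroup G (g.support : Set α)ᶜ)
      (SubMulAction.ofFixingSubgroup G (g.support : Set α)ᶜ) := by
  have := isPretransitive_of_isCycle_mem hc hg
  apply IsPreprimitive.of_prime_card
  convert hp
  rw [← Set.ncard_coe_finset, ← Nat.card_coe_set_eq]
  exact Nat.card_congr (Equiv.subtypeEquivRight fun x ↦ mem_ofFixingSubgroup_compl_support)

theorem isMultiplyPretransitive_of_isCycle_mem (hG : IsPreprimitive G α)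
    (hc : g.IsCycle) (hp : (#g.support).Prime) (hcard : #g.support < Fintype.card α)
    (hg : g ∈ G) : IsMultiplyPretransitive G α #g.supportᶜ := by
  have hcompl := card_add_card_compl g.support
  have htwo := hp.two_le
  obtain ⟨n, hn⟩ := Nat.exists_eq_add_of_lt (show 0 < #g.supportᶜ by omega)
  rw [zero_add] at hn
  have hmul := hG.isMultiplyPreprimitive
    (by rw [← coe_compl, Set.ncard_coe_finset, hn])
    (by rw [Nat.card_eq_fintype_card]; omega)
    (isPreprimitive_fixingSubgroup_of_isCycle_mem hc hp hg)
  have := hmul.isMultiplyPretransitive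
  rw [hn]
  exact isMultiplyPretransitive_of_le (n := n + 2) (by omega)
    (by rw [Nat.card_eq_fintype_card]; omega)

theorem isPreprimitive_of_isCycle_mem [IsPretransitive G α] (hc : g.IsCycle)
    (hp : (#g.support).Prime) (hcard : Fintype.card α < 2 * #g.support) (hg : g ∈ G) :
    IsPreprimitive G α := by
  have := isPreprimitive_fixingSubgroup_of_isCycle_mem hc hp hg
  refine IsPreprimitive.of_card_lt
    (f := SubMulAction.ofFixingSubgroup_equivariantMap G (g.support : Set α)ᶜ) ?_
  convert hcard
  · exact Nat.card_eq_fintype_card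
  · rw [← Set.ncard_coe_finset]
    congr 1
    ext x
    refine ⟨?_, fun hx ↦ ⟨⟨x, mem_ofFixingSubgroup_compl_support.mpr hx⟩, rfl⟩⟩
    rintro ⟨y, rfl⟩
    exact mem_ofFixingSubgroup_compl_support.mp y.2

-- As `G` is multiply transitive, it contains two elements which act on the fixed points of `g` as
-- `swap a b` and `swap a c` and which normalise `zpowers g`. On the support of `g` their commutator
-- centralises `g`, so it is a power of `g`; what remains is a 3-cycle.
theorem alternatingGroup_le_of_isPreprimitive_of_isCycle_mem (hG : IsPreprimitive G α)
    (hc : g.IsCycle) (hp : (#g.support).Prime) (hcard : #g.support + 3 ≤ Fintype.card α)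
    (hg : g ∈ G) : alternatingGroup α ≤ G := by
  have := Fact.mk hp
  have hcompl := card_add_card_compl g.support
  obtain ⟨a, b, c, ha, hb, hc', hab, hac, hbc⟩ :=
    two_lt_card_iff.mp (show 2 < #g.supportᶜ by omega)
  have := isMultiplyPretransitive_of_isCycle_mem hG hc hp (by omega) hg
  have hdisj : ∀ {x y}, x ∈ g.supportᶜ → y ∈ g.supportᶜ → (swap x y).Disjoint g := by
    intro x y hx hy z
    by_cases hz : z = x ∨ z = y
    · right; rcases hz with rfl | rfl <;> exact notMem_support.mp (mem_compl.mp ‹_›)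
    · left; push Not at hz; exact swap_apply_of_ne_of_ne hz.1 hz.2
  obtain ⟨r₁, hr₁, hr₁s, hr₁g⟩ := exists_disjoint_mul_mem rfl hc.orderOf rfl hg (hdisj ha hb)
  obtain ⟨r₂, hr₂, hr₂s, hr₂g⟩ := exists_disjoint_mul_mem rfl hc.orderOf rfl hg (hdisj ha hc')
  have hcomm : ∀ {x y}, x ∈ g.supportᶜ → y ∈ g.supportᶜ → ∀ {r : Perm α}, r.support ⊆ g.support →
    Commute (swap x y) r := fun hx hy _ hr ↦ ((hdisj hx hy).mono le_rfl hr).commute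
  have hmem : r₁⁻¹ * r₂⁻¹ * r₁ * r₂ ∈ G := by
    refine (zpowers_le.mpr hg) (mem_zpowers_of_commute_of_support_subset hc
      (commute_of_conj_mem_zpowers hr₁g hr₂g) ?_)
    grw [support_mul_le, support_mul_le, support_mul_le, support_inv, support_inv, hr₁s, hr₂s]
    simp
  refine alternatingGroup_le_of_isPreprimitive_of_isThreeCycle_mem hG
    (isThreeCycle_swap_mul_swap_same hab hac hbc).isThreeCycle_sq ?_
  rw [← mul_mem_cancel_right hmem]
  convert mul_mem (mul_mem (mul_mem (inv_mem hr₁) (inv_mem hr₂)) hr₁) hr₂ using 1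
  rw [inv_mul_inv_mul_mul_mul_of_commute (hcomm ha hb hr₁s) (hcomm ha hb hr₂s) (hcomm ha hc' hr₁s)
    (hcomm ha hc' hr₂s), swap_inv, swap_inv, ← mul_assoc (swap a b * _)]

theorem alternatingGroup_le_of_prime_dvd_card [IsPretransitive G α] {p : ℕ} (hp : p.Prime)
    (hdvd : p ∣ Nat.card G) (hlt : Fintype.card α < 2 * p) (hle : p + 3 ≤ Fintype.card α) :
    alternatingGroup α ≤ G := by
  have := Fact.mk hp
  obtain ⟨⟨g, hg⟩, horder⟩ := exists_prime_orderOf_dvd_card' p hdvd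
  rw [orderOf_mk] at horder
  have hc : g.IsCycle := isCycle_of_prime_order' (horder ▸ hp) (by rwa [horder])
  rw [← horder, hc.orderOf] at hp hlt hle
  exact alternatingGroup_le_of_isPreprimitive_of_isCycle_mem
    (isPreprimitive_of_isCycle_mem hc hp hlt hg) hc hp hle hg

end PrimeCycles

open IsDedekindDomain NumberField

section NewtonSegment

variable {K : Type*} [Field K] (v : AbsoluteValue K ℝ) (ρ : ℝ) (f : K[X])

/-- The size `v (f i) * ρ ^ i` of the `i`-th term of `f` on the circle `v x = ρ`. -/
def termSize (i : ℕ) : ℝ :=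
  v (f.coeff i) * ρ ^ i

/-- The largest terms of `f` on the circle `v x = ρ` have indices between `a` and `b`, and the
terms of index `a` and `b` are among them: `[a, b]` is the projection of the edge (possibly reduced
to a vertex) of the Newton polygon of `f` whose slope is given by `ρ`. -/
structure IsNewtonSegment (a b : ℕ) : Prop where
  pos : 0 < termSize v ρ f a
  eq : termSize v ρ f b = termSize v ρ f a
  le : ∀ i, termSize v ρ f i ≤ termSize v ρ f a
  lt_of_lt_left : ∀ i < a, termSize v ρ f i < termSize v ρ f a
  lt_of_right_lt : ∀ i, b < i → termSize v ρ f i < termSize v ρ f a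

variable {v ρ f} {g : K[X]} {a b a' b' : ℕ}

theorem termSize_nonneg (hρ : 0 ≤ ρ) (i : ℕ) : 0 ≤ termSize v ρ f i :=
  mul_nonneg (v.nonneg _) (pow_nonneg hρ i)

theorem coeff_mul_coeff_size {k i j : ℕ} (h : i + j = k) :
    v (f.coeff i * g.coeff j) * ρ ^ k = termSize v ρ f i * termSize v ρ g j := by
  rw [map_mul, ← h, pow_add, mul_mul_mul_comm, termSize, termSize]

theorem exists_termSize_mul_le (hv : IsNonarchimedean v) (hρ : 0 ≤ ρ) (k : ℕ) :
    ∃ i j, i + j = k ∧ termSize v ρ (f * g) k ≤ termSize v ρ f i * termSize v ρ g j := by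
  obtain ⟨⟨i, j⟩, hij, h⟩ := hv.finset_image_add_of_nonempty
    (fun x : ℕ × ℕ ↦ f.coeff x.1 * g.coeff x.2) (t := antidiagonal k) ⟨(0, k), by simp⟩
  rw [HasAntidiagonal.mem_antidiagonal] at hij
  refine ⟨i, j, hij, ?_⟩
  rw [termSize, coeff_mul, ← coeff_mul_coeff_size hij]
  gcongr

theorem termSize_mul_eq (hv : IsNonarchimedean v) (hρ : 0 < ρ) {k l : ℕ}
    (h : ∀ i j, i + j = k + l → (i < k ∨ j < l) →
      termSize v ρ f i * termSize v ρ g j < termSize v ρ f k * termSize v ρ g l) :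
    termSize v ρ (f * g) (k + l) = termSize v ρ f k * termSize v ρ g l := by
  rw [termSize, coeff_mul, ← coeff_mul_coeff_size rfl]
  congr 1
  refine hv.apply_sum_eq_of_lt (k := (k, l)) (fun x ↦ (v.map_neg x).symm) (by simp) ?_
  rintro ⟨i, j⟩ hij hne
  rw [HasAntidiagonal.mem_antidiagonal] at hij
  have hlt := h i j hij (by
    by_contra! hle
    exact hne (Prod.ext (by dsimp only; omega) (by dsimp only; omega)))
  rw [← coeff_mul_coeff_size hij, ← coeff_mul_coeff_size rfl] at hlt
  exact lt_of_mul_lt_mul_right hlt (by positivity)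

namespace IsNewtonSegment

theorem left_le_right (h : IsNewtonSegment v ρ f a b) : a ≤ b := by
  by_contra! hlt
  exact (h.lt_of_lt_left b hlt).ne h.eq

theorem unique (h : IsNewtonSegment v ρ f a b) (h' : IsNewtonSegment v ρ f a' b') :
    a = a' ∧ b = b' := by
  have hmax : termSize v ρ f a = termSize v ρ f a' := (h'.le a).antisymm (h.le a')
  constructor <;> apply le_antisymm <;> by_contra! hlt
  · exact (h.lt_of_lt_left _ hlt).ne hmax.symm
  · exact (h'.lt_of_lt_left _ hlt).ne hmax
  · exact (h'.lt_of_right_lt _ hlt).ne (h.eq.trans hmax)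
  · exact (h.lt_of_right_lt _ hlt).ne (h'.eq.trans hmax.symm)

theorem mul (hv : IsNonarchimedean v) (hρ : 0 < ρ) (hf : IsNewtonSegment v ρ f a b)
    (hg : IsNewtonSegment v ρ g a' b') : IsNewtonSegment v ρ (f * g) (a + a') (b + b') := by
  have lt_of_left : ∀ i j, termSize v ρ f i < termSize v ρ f a →
      termSize v ρ f i * termSize v ρ g j < termSize v ρ f a * termSize v ρ g a' :=
    fun i j hi ↦ mul_lt_mul_of_lt_of_le_of_nonneg_of_pos hi (hg.le j) (termSize_nonneg hρ.le i)
      hg.pos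
  have lt_of_right : ∀ i j, termSize v ρ g j < termSize v ρ g a' →
      termSize v ρ f i * termSize v ρ g j < termSize v ρ f a * termSize v ρ g a' :=
    fun i j hj ↦ mul_lt_mul_of_le_of_lt_of_nonneg_of_pos (hf.le i) hj (termSize_nonneg hρ.le j)
      hf.pos
  have heq : termSize v ρ (f * g) (a + a') = termSize v ρ f a * termSize v ρ g a' := by
    refine termSize_mul_eq hv hρ fun i j _ h ↦ ?_
    exact h.elim (fun hi ↦ lt_of_left i j (hf.lt_of_lt_left i hi))
      (fun hj ↦ lt_of_right i j (hg.lt_of_lt_left j hj))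
  refine ⟨heq ▸ mul_pos hf.pos hg.pos, ?_, fun k ↦ ?_, fun k hk ↦ ?_, fun k hk ↦ ?_⟩
  · rw [heq, ← hf.eq, ← hg.eq]
    refine termSize_mul_eq hv hρ fun i j hij h ↦ ?_
    rw [hf.eq, hg.eq]
    rcases lt_or_ge b i with hi | hi
    · exact lt_of_left i j (hf.lt_of_right_lt i hi)
    · exact lt_of_right i j (hg.lt_of_right_lt j (by omega))
  all_goals
    obtain ⟨i, j, hij, hle⟩ := exists_termSize_mul_le (f := f) (g := g) hv hρ.le k
    rw [heq]
  · exact hle.trans (mul_le_mul (hf.le i) (hg.le j) (termSize_nonneg hρ.le j) hf.pos.le)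
  · rcases lt_or_ge i a with hi | hi
    · exact hle.trans_lt (lt_of_left i j (hf.lt_of_lt_left i hi))
    · exact hle.trans_lt (lt_of_right i j (hg.lt_of_lt_left j (by omega)))
  · rcases lt_or_ge b i with hi | hi
    · exact hle.trans_lt (lt_of_left i j (hf.lt_of_right_lt i hi))
    · exact hle.trans_lt (lt_of_right i j (hg.lt_of_right_lt j (by omega)))

theorem of_X_sub_C (hρ : 0 < ρ) (r : K) :
    IsNewtonSegment v ρ (X - C r) (if v r < ρ then 1 else 0) (if v r ≤ ρ then 1 else 0) := by
  have h0 : termSize v ρ (X - C r) 0 = v r := by simp [termSize]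
  have h1 : termSize v ρ (X - C r) 1 = ρ := by simp [termSize]
  have h2 : ∀ i, 2 ≤ i → termSize v ρ (X - C r) i = 0 := fun i hi ↦ by
    have := natDegree_X_sub_C_le r
    rw [termSize, coeff_eq_zero_of_natDegree_lt (by omega), map_zero, zero_mul]
  have cases : ∀ i, i = 0 ∨ i = 1 ∨ 2 ≤ i := by omega
  rcases lt_trichotomy (v r) ρ with h | h | h
  · rw [if_pos h, if_pos h.le]
    constructor <;> grind
  · rw [if_neg h.not_lt, if_pos h.le]
    constructor <;> grind
  · rw [if_neg h.not_gt, if_neg h.not_ge]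
    constructor <;> grind

protected theorem C {c : K} (hc : c ≠ 0) : IsNewtonSegment v ρ (C c) 0 0 := by
  have h0 : termSize v ρ (C c) 0 = v c := by simp [termSize]
  have hne : ∀ i, i ≠ 0 → termSize v ρ (C c) i = 0 := fun i hi ↦ by
    rw [termSize, coeff_C_of_ne_zero hi, map_zero, zero_mul]
  have hpos := v.pos hc
  constructor <;> grind

theorem prod_X_sub_C (hv : IsNonarchimedean v) (hρ : 0 < ρ) (s : Multiset K) :
    IsNewtonSegment v ρ (s.map (X - C ·)).prod (s.countP (v · < ρ)) (s.countP (v · ≤ ρ)) := by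
  induction s using Multiset.induction with
  | empty => simpa using IsNewtonSegment.C (one_ne_zero (α := K))
  | cons r s ih =>
    rw [Multiset.map_cons, Multiset.prod_cons, Multiset.countP_cons, Multiset.countP_cons,
      add_comm (s.countP _), add_comm (s.countP _)]
    exact (of_X_sub_C hρ r).mul hv hρ ih

theorem exists_mem_roots (hv : IsNonarchimedean v) (hρ : 0 < ρ) (hf : f.Splits)
    (h : IsNewtonSegment v ρ f a b) (hab : a < b) : ∃ r ∈ f.roots, v r = ρ := by
  have hf0 : f.leadingCoeff ≠ 0 := by
    rintro h0
    have := h.pos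
    simp [leadingCoeff_eq_zero.mp h0, termSize] at this
  have hprod := (IsNewtonSegment.C hf0).mul hv hρ (prod_X_sub_C hv hρ f.roots)
  rw [zero_add, zero_add, ← hf.eq_prod_roots] at hprod
  obtain ⟨rfl, rfl⟩ := h.unique hprod
  by_contra! hne
  refine hab.ne (Multiset.countP_congr rfl fun r hr ↦ ?_)
  rw [(hne r hr).le_iff_lt]

theorem exists_of_ne_zero (hf : f ≠ 0) (hρ : 0 < ρ) : ∃ a b, IsNewtonSegment v ρ f a b := by
  obtain ⟨m, hm, hmax⟩ := exists_max_image f.support (termSize v ρ f) (nonempty_support_iff.mpr hf)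
  have hpos : 0 < termSize v ρ f m :=
    mul_pos (v.pos (mem_support_iff.mp hm)) (pow_pos hρ m)
  have hle : ∀ i, termSize v ρ f i ≤ termSize v ρ f m := fun i ↦ by
    by_cases hi : i ∈ f.support
    · exact hmax i hi
    · rw [termSize, notMem_support_iff.mp hi, map_zero, zero_mul]; exact hpos.le
  let s := f.support.filter fun i ↦ termSize v ρ f i = termSize v ρ f m
  have mem_s : ∀ i, i ∈ s ↔ termSize v ρ f i = termSize v ρ f m := by
    intro i
    refine mem_filter.trans (and_iff_right_of_imp fun hi ↦ mem_support_iff.mpr fun h0 ↦ ?_)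
    exact hpos.ne (by rw [← hi, termSize, h0, map_zero, zero_mul])
  have hs : s.Nonempty := ⟨m, (mem_s m).mpr rfl⟩
  have ha := (mem_s _).mp (s.min'_mem hs)
  refine ⟨s.min' hs, s.max' hs, ha ▸ hpos, ?_, ha ▸ hle, fun i hi ↦ ?_, fun i hi ↦ ?_⟩
  · rw [ha, (mem_s _).mp (s.max'_mem hs)]
  · rw [ha]
    exact (hle i).lt_of_ne fun h ↦ hi.not_ge (s.min'_le i ((mem_s i).mpr h))
  · rw [ha]
    exact (hle i).lt_of_ne fun h ↦ hi.not_ge (s.le_max' i ((mem_s i).mpr h))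

end IsNewtonSegment

end NewtonSegment

section PadicSegment

variable {K : Type*} [Field K] {v : AbsoluteValue K ℝ} {p : ℕ}

theorem apply_intCast_eq_one (hv : IsNonarchimedean v) (hp : p.Prime) (hvp : v p < 1) {z : ℤ}
    (hz : ¬(p : ℤ) ∣ z) : v z = 1 := by
  obtain ⟨x, y, hxy⟩ := (Nat.prime_iff_prime_int.mp hp).irreducible.coprime_iff_not_dvd.mpr hz
  refine hv.apply_intCast_le_one.antisymm (not_lt.mp fun hlt ↦ ?_)
  have mul_lt : ∀ (s : ℤ) {t : K}, v t < 1 → v (s * t) < 1 := fun s t ht ↦ by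
    rw [map_mul]
    exact mul_lt_one_of_nonneg_of_lt_one_right hv.apply_intCast_le_one (v.nonneg t) ht
  have hone : (x * p + y * z : K) = 1 := by exact_mod_cast congrArg (Int.cast (R := K)) hxy
  refine (hv (x * p) (y * z)).not_gt ?_
  rw [hone, map_one]
  exact max_lt (mul_lt x hvp) (mul_lt y hlt)

theorem apply_intCast_le_pow (hv : IsNonarchimedean v) {k : ℕ} {z : ℤ} (h : (p : ℤ) ^ k ∣ z) :
    v z ≤ v p ^ k := by
  obtain ⟨w, rfl⟩ := h
  rw [Int.cast_mul, map_mul, Int.cast_pow, map_pow, Int.cast_natCast]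
  exact mul_le_of_le_one_right (by positivity) hv.apply_intCast_le_one

theorem apply_intCast_eq_pow (hv : IsNonarchimedean v) (hp : p.Prime) (hvp : v p < 1) {k : ℕ}
    {z : ℤ} (h : (p : ℤ) ^ k ∣ z) (h' : ¬(p : ℤ) ^ (k + 1) ∣ z) : v z = v p ^ k := by
  obtain ⟨w, rfl⟩ := h
  rw [pow_succ, mul_dvd_mul_iff_left (by simp [hp.ne_zero])] at h'
  rw [Int.cast_mul, map_mul, apply_intCast_eq_one hv hp hvp h', mul_one, Int.cast_pow, map_pow,
    Int.cast_natCast]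

/-- The points `(i, ord_p (c i))` lie on or above the line of slope `-h / m` through `(b, 0)`; this
line contains the points of index `a` and `b` and no point of index less than `a`. The conditions
are raised to the power `m` to avoid fractions. -/
def IsPadicSegment (p h m : ℕ) (c : ℕ → ℤ) (a b : ℕ) : Prop :=
  a ≤ b ∧ ¬(p : ℤ) ∣ c b ∧ (∀ i < b, (p : ℤ) ^ (h * (b - i)) ∣ c i ^ m) ∧
    ¬(p : ℤ) ^ (h * (b - a) + 1) ∣ c a ^ m ∧ ∀ i < a, (p : ℤ) ^ (h * (b - i) + 1) ∣ c i ^ m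

instance (p h m : ℕ) (c : ℕ → ℤ) (a b : ℕ) : Decidable (IsPadicSegment p h m c a b) :=
  inferInstanceAs (Decidable (_ ∧ _))

namespace IsPadicSegment

variable {ρ : ℝ} {f : K[X]} {c : ℕ → ℤ} {h m a b : ℕ}

theorem left_le_right (hc : IsPadicSegment p h m c a b) : a ≤ b := hc.1

theorem apply_pow_right (hc : IsPadicSegment p h m c a b) (hv : IsNonarchimedean v)
    (hp : p.Prime) (hvp : v p < 1) : v (c b ^ m : ℤ) = 1 := by
  rw [Int.cast_pow, map_pow, apply_intCast_eq_one hv hp hvp hc.2.1, one_pow]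

theorem apply_pow_left (hc : IsPadicSegment p h m c a b) (hv : IsNonarchimedean v)
    (hp : p.Prime) (hvp : v p < 1) : v (c a ^ m : ℤ) = v p ^ (h * (b - a)) := by
  rcases hc.1.eq_or_lt with rfl | hab
  · rw [hc.apply_pow_right hv hp hvp, Nat.sub_self, mul_zero, pow_zero]
  · exact apply_intCast_eq_pow hv hp hvp (hc.2.2.1 a hab) hc.2.2.2.1

theorem apply_pow_le (hc : IsPadicSegment p h m c a b) (hv : IsNonarchimedean v) (i : ℕ) :
    v (c i ^ m : ℤ) ≤ v p ^ (h * (b - i)) := by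
  rcases lt_or_ge i b with hi | hi
  · exact apply_intCast_le_pow hv (hc.2.2.1 i hi)
  · rw [Nat.sub_eq_zero_of_le hi, mul_zero, pow_zero]
    exact hv.apply_intCast_le_one

theorem apply_pow_lt (hc : IsPadicSegment p h m c a b) (hv : IsNonarchimedean v) (hv0 : 0 < v p)
    (hvp : v p < 1) {i : ℕ} (hi : i < a) : v (c i ^ m : ℤ) < v p ^ (h * (b - i)) :=
  (apply_intCast_le_pow hv (hc.2.2.2.2 i hi)).trans_lt
    (pow_lt_pow_right_of_lt_one₀ hv0 hvp (Nat.lt_succ_self _))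

theorem termSize_pow (hρ : ρ ^ m = v p ^ h) (hf : ∀ i, f.coeff i = c i) (i : ℕ) :
    termSize v ρ f i ^ m = v (c i ^ m : ℤ) * v p ^ (h * i) := by
  rw [termSize, hf, mul_pow, ← pow_mul, mul_comm i, pow_mul, hρ, ← pow_mul, Int.cast_pow, map_pow]

theorem isNewtonSegment (hc : IsPadicSegment p h m c a b) (hv : IsNonarchimedean v) (hp : p.Prime)
    (hv0 : 0 < v p) (hvp : v p < 1) (hh : h ≠ 0) (hm : m ≠ 0) (hρ0 : 0 < ρ)
    (hρ : ρ ^ m = v p ^ h) (hf : ∀ i, f.coeff i = c i) : IsNewtonSegment v ρ f a b := by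
  have line : ∀ i ≤ b, v p ^ (h * (b - i)) * v p ^ (h * i) = v p ^ (h * b) := fun i hi ↦ by
    rw [← pow_add, ← mul_add, Nat.sub_add_cancel hi]
  have pow_right : termSize v ρ f b ^ m = v p ^ (h * b) := by
    rw [termSize_pow hρ hf, hc.apply_pow_right hv hp hvp, one_mul]
  have pow_left : termSize v ρ f a ^ m = v p ^ (h * b) := by
    rw [termSize_pow hρ hf, hc.apply_pow_left hv hp hvp, line a hc.left_le_right]
  have nonneg : ∀ i, 0 ≤ termSize v ρ f i := termSize_nonneg hρ0.le
  have lt_right : ∀ i, b < i → termSize v ρ f i < termSize v ρ f a := fun i hi ↦ by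
    refine lt_of_pow_lt_pow_left₀ m (nonneg a) ?_
    rw [pow_left, termSize_pow hρ hf]
    exact (mul_le_of_le_one_left (by positivity) hv.apply_intCast_le_one).trans_lt
      (pow_lt_pow_right_of_lt_one₀ hv0 hvp (Nat.mul_lt_mul_of_pos_left hi hh.pos))
  refine ⟨?_, ?_, fun i ↦ ?_, fun i hi ↦ ?_, lt_right⟩
  · refine (nonneg a).lt_of_ne' fun h0 ↦ (pow_pos hv0 (h * b)).ne ?_
    rw [← pow_left, h0, zero_pow hm]
  · exact (pow_left_inj₀ (nonneg b) (nonneg a) hm).mp (pow_right.trans pow_left.symm)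
  · rcases le_or_gt i b with hi | hi
    · refine le_of_pow_le_pow_left₀ hm (nonneg a) ?_
      rw [pow_left, termSize_pow hρ hf, ← line i hi]
      gcongr
      exact hc.apply_pow_le hv i
    · exact (lt_right i hi).le
  · refine lt_of_pow_lt_pow_left₀ m (nonneg a) ?_
    rw [pow_left, termSize_pow hρ hf, ← line i (hi.le.trans hc.left_le_right)]
    gcongr
    exact hc.apply_pow_lt hv hv0 hvp hi

end IsPadicSegment

end PadicSegment

section Denominator

variable {K : Type*} [Field K] {v : AbsoluteValue K ℝ} {ρ π : ℝ} {f g : K[X]} {a b h m : ℕ}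

theorem IsNewtonSegment.le_natDegree (hf : IsNewtonSegment v ρ f a b) : b ≤ f.natDegree := by
  refine le_natDegree_of_ne_zero fun h0 ↦ hf.pos.ne ?_
  rw [← hf.eq, termSize, h0, map_zero, zero_mul]

theorem IsNewtonSegment.dvd_sub (hf : IsNewtonSegment v ρ f a b) (hπ0 : 0 < π) (hπ1 : π < 1)
    (hπ : ∀ x, x ≠ 0 → ∃ k : ℤ, v x = π ^ k) (hρ : ρ ^ m = π ^ h) (hhm : h.Coprime m) :
    m ∣ b - a := by
  have coeff_ne_zero : ∀ i, 0 < termSize v ρ f i → f.coeff i ≠ 0 := fun i hi h0 ↦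
    hi.ne (by rw [termSize, h0, map_zero, zero_mul])
  obtain ⟨k, hk⟩ := hπ _ (coeff_ne_zero a hf.pos)
  obtain ⟨l, hl⟩ := hπ _ (coeff_ne_zero b (hf.eq ▸ hf.pos))
  have heq := hf.eq
  rw [termSize, termSize, hk, hl] at heq
  have hpow : ∀ (t : ℤ) (i : ℕ), (π ^ t * ρ ^ i) ^ m = π ^ (t * m + h * i) := fun t i ↦ by
    rw [mul_pow, ← pow_mul, mul_comm i, pow_mul, hρ, zpow_add₀ hπ0.ne', zpow_mul]
    norm_cast
    rw [← pow_mul]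
  have hexp : l * m + h * b = k * m + h * a := by
    have := congrArg (· ^ m) heq
    simp only [hpow] at this
    exact zpow_right_injective₀ hπ0 hπ1.ne this
  have hdvd : (m : ℤ) ∣ h * (b - a : ℕ) :=
    ⟨k - l, by rw [Nat.cast_sub hf.left_le_right]; linear_combination hexp⟩
  exact hhm.symm.dvd_of_dvd_mul_left (by exact_mod_cast hdvd)

theorem IsNewtonSegment.natDegree_add_sub_le (hv : IsNonarchimedean v)
    (hfg : IsNewtonSegment v ρ (f * g) a b) (hρ0 : 0 < ρ) (hπ0 : 0 < π) (hπ1 : π < 1)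
    (hπ : ∀ x, x ≠ 0 → ∃ k : ℤ, v x = π ^ k) (hρ : ρ ^ m = π ^ h) (hhm : h.Coprime m)
    (hf : f.natDegree < m) : f.natDegree + (b - a) ≤ (f * g).natDegree := by
  have hne : f * g ≠ 0 := fun h0 ↦ hfg.pos.ne (by rw [h0, termSize, coeff_zero, map_zero, zero_mul])
  obtain ⟨a₁, b₁, h₁⟩ := exists_of_ne_zero (v := v) (left_ne_zero_of_mul hne) hρ0
  obtain ⟨a₂, b₂, h₂⟩ := exists_of_ne_zero (v := v) (right_ne_zero_of_mul hne) hρ0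
  obtain ⟨rfl, rfl⟩ := hfg.unique (h₁.mul hv hρ0 h₂)
  rw [natDegree_mul (left_ne_zero_of_mul hne) (right_ne_zero_of_mul hne)]
  have hle := h₁.le_natDegree
  have := Nat.eq_zero_of_dvd_of_lt (h₁.dvd_sub hπ0 hπ1 hπ hρ hhm) (by omega)
  have := h₂.le_natDegree
  omega

end Denominator

section RationalIrreducibility

theorem exists_pos_pow_eq {x : ℝ} (hx : 0 < x) {m : ℕ} (hm : m ≠ 0) : ∃ ρ : ℝ, 0 < ρ ∧ ρ ^ m = x :=
  ⟨x ^ (m⁻¹ : ℝ), Real.rpow_pos_of_pos hx _, Real.rpow_inv_natCast_pow hx.le hm⟩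

theorem isNonarchimedean_padic (p : ℕ) [Fact p.Prime] :
    IsNonarchimedean (Rat.AbsoluteValue.padic p) := fun x y ↦ by
  simpa only [Rat.AbsoluteValue.padic_eq_padicNorm, ← Rat.cast_max, Rat.cast_le] using
    padicNorm.nonarchimedean

theorem padic_self (p : ℕ) [Fact p.Prime] : Rat.AbsoluteValue.padic p p = (p : ℝ)⁻¹ := by
  rw [Rat.AbsoluteValue.padic_eq_padicNorm, padicNorm.padicNorm_p_of_prime, Rat.cast_inv,
    Rat.cast_natCast]

theorem exists_padic_eq_zpow (p : ℕ) [Fact p.Prime] (x : ℚ) (hx : x ≠ 0) :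
    ∃ k : ℤ, Rat.AbsoluteValue.padic p x = (p : ℝ)⁻¹ ^ k := by
  obtain ⟨k, hk⟩ := padicNorm.values_discrete (p := p) hx
  exact ⟨k, by rw [Rat.AbsoluteValue.padic_eq_padicNorm, hk]; simp⟩

theorem IsPadicSegment.natDegree_add_sub_le {p h m a b : ℕ} {c : ℕ → ℤ}
    (hc : IsPadicSegment p h m c a b) (hp : p.Prime) (hh : h ≠ 0) (hhm : h.Coprime m) {f g : ℚ[X]}
    (hfg : ∀ i, (f * g).coeff i = c i) (hf : f.natDegree < m) :
    f.natDegree + (b - a) ≤ (f * g).natDegree := by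
  have : Fact p.Prime := ⟨hp⟩
  have hp0 : 0 < (p : ℝ)⁻¹ := inv_pos.mpr (mod_cast hp.pos)
  have hp1 : (p : ℝ)⁻¹ < 1 := inv_lt_one_of_one_lt₀ (mod_cast hp.one_lt)
  have hm : m ≠ 0 := by omega
  obtain ⟨ρ, hρ0, hρ⟩ := exists_pos_pow_eq (pow_pos hp0 h) hm
  have hv := isNonarchimedean_padic p
  have hseg := hc.isNewtonSegment hv hp (by rwa [padic_self]) (by rwa [padic_self]) hh hm hρ0
    (by rwa [padic_self]) hfg
  exact hseg.natDegree_add_sub_le hv hρ0 hp0 hp1 (exists_padic_eq_zpow p) hρ hhm hf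

theorem eval_ne_zero_of_forall_not_dvd {P : ℤ[X]} {N : ℕ} (hN : N ≠ 0)
    (h : ∀ x < N, ¬(N : ℤ) ∣ P.eval (x : ℤ)) (z : ℤ) : P.eval z ≠ 0 := by
  intro hz
  have hN' : (N : ℤ) ≠ 0 := by exact_mod_cast hN
  obtain ⟨x, hx⟩ := Int.eq_ofNat_of_zero_le (Int.emod_nonneg z hN')
  have hlt := Int.emod_lt_of_pos z (b := N) (by omega)
  have hdvd : (N : ℤ) ∣ x - z := Int.modEq_iff_dvd.mp (hx ▸ (Int.mod_modEq z N).symm)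
  refine h x (by omega) ?_
  simpa only [hz, sub_zero] using hdvd.trans (sub_dvd_eval_sub _ _ P)

theorem aeval_rat_ne_zero {P : ℤ[X]} (hP : P.Monic) (h : ∀ z, P.eval z ≠ 0) (x : ℚ) :
    aeval x P ≠ 0 := by
  intro hx
  obtain ⟨z, rfl, -⟩ := exists_integer_of_is_root_of_monic hP hx
  rw [aeval_algebraMap_apply_eq_algebraMap_eval, map_eq_zero_iff _ Int.cast_injective] at hx
  exact h z hx

theorem irreducible_map_of_isPadicSegment {P : ℤ[X]} {c : ℕ → ℤ} (hP : P.Monic)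
    (hdeg : P.natDegree ≠ 0) (hc : ∀ i, P.coeff i = c i) (hroot : ∀ z, P.eval z ≠ 0)
    (hseg : ∀ d ∈ Icc 2 (P.natDegree / 2), ∃ p h m a b, p.Prime ∧ h.Coprime m ∧
      IsPadicSegment p h m c a b ∧ d < m ∧ P.natDegree < d + (b - a)) :
    Irreducible (P.map (Int.castRingHom ℚ)) := by
  have hdegQ : (P.map (Int.castRingHom ℚ)).natDegree = P.natDegree := hP.natDegree_map _
  have hne : P.map (Int.castRingHom ℚ) ≠ 1 := fun h ↦ hdeg (by rw [← hdegQ, h, natDegree_one])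
  rw [(hP.map _).irreducible_iff_lt_natDegree_lt hne, hdegQ]
  rintro f hf hd ⟨g, hg⟩
  rw [mem_Ioc] at hd
  rcases (Nat.succ_le_of_lt hd.1).eq_or_lt with h1 | h2
  · obtain ⟨x, hx⟩ := exists_root_of_degree_eq_one
      ((degree_eq_iff_natDegree_eq hf.ne_zero).mpr h1.symm)
    refine aeval_rat_ne_zero hP hroot x ?_
    rw [← eval_map_algebraMap, algebraMap_int_eq, hg]
    exact (hx.dvd ⟨g, rfl⟩).eq_zero
  · obtain ⟨p, h, m, a, b, hp, hhm, hs, hdm, hlt⟩ := hseg f.natDegree (mem_Icc.mpr ⟨h2, hd.2⟩)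
    have hh : h ≠ 0 := by
      rintro rfl
      have := (Nat.coprime_zero_left m).mp hhm
      omega
    refine (hs.natDegree_add_sub_le hp hh hhm (f := f) (g := g) (fun i ↦ ?_) hdm).not_gt ?_
    · rw [← hg, coeff_map, hc, Int.coe_castRingHom]
    · rwa [← hg, hdegQ]

end RationalIrreducibility

section AdicValues

variable {R K : Type*} [CommRing R] [IsDedekindDomain R] [Field K] [Algebra R K]
  [IsFractionRing R K] (w : HeightOneSpectrum R) {b : NNReal} (hb : 1 < b)

theorem adicAbv_eq_zpow_log {x : K} (hx : x ≠ 0) :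
    w.adicAbv hb x = (b : ℝ) ^ WithZero.log (w.valuation K x) := by
  have toNNReal_exp (k : ℤ) : WithZeroMulInt.toNNReal (ne_zero_of_lt hb) (.exp k) = b ^ k :=
    WithZeroMulInt.toNNReal_neg_apply _ WithZero.exp_ne_zero
  rw [← NNReal.coe_zpow, ← toNNReal_exp, WithZero.exp_log ((w.valuation K).ne_zero_iff.mpr hx)]
  rfl

theorem exists_adicAbv_eq_zpow (x : K) (hx : x ≠ 0) :
    ∃ k : ℤ, w.adicAbv hb x = (b : ℝ)⁻¹ ^ k :=
  ⟨_, by rw [adicAbv_eq_zpow_log w hb hx, inv_zpow', neg_neg]⟩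

theorem adicAbv_algebraMap_eq_pow {r : R} (hr : r ≠ 0) : w.adicAbv hb (algebraMap R K r) =
    (b : ℝ)⁻¹ ^ multiplicity w.asIdeal (Ideal.span {r}) := by
  rw [adicAbv_eq_zpow_log w hb ((FaithfulSMul.algebraMap_eq_zero_iff R K).not.mpr hr),
    w.valuation_of_algebraMap, w.intValuation_eq_exp_neg_multiplicity hr, WithZero.log_exp,
    zpow_neg, zpow_natCast, inv_pow]

end AdicValues

theorem multiplicity_dvd_card_gal {K : Type*} [Field K] [NumberField K] [IsGalois ℚ K] {p : ℕ}
    (hp : p.Prime) (w : HeightOneSpectrum (𝓞 K)) [w.asIdeal.LiesOver (Ideal.span {(p : ℤ)})] :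
    multiplicity w.asIdeal (Ideal.span {(p : 𝓞 K)}) ∣ Nat.card Gal(K/ℚ) := by
  have : (Ideal.span {(p : ℤ)}).IsPrime :=
    (Ideal.span_singleton_prime (mod_cast hp.ne_zero)).mpr (Nat.prime_iff_prime_int.mp hp)
  have hmap : (Ideal.span {(p : ℤ)}).map (algebraMap ℤ (𝓞 K)) = Ideal.span {(p : 𝓞 K)} := by
    rw [Ideal.map_span, Set.image_singleton, map_natCast]
  have hne : Ideal.span {(p : 𝓞 K)} ≠ ⊥ := by
    simpa only [ne_eq, Ideal.span_singleton_eq_bot, Nat.cast_eq_zero] using hp.ne_zero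
  rw [← hmap, ← Ideal.IsDedekindDomain.ramificationIdx_eq_multiplicity _ _ (hmap ▸ hne),
    ← Ideal.ramificationIdxIn_eq_ramificationIdx (Ideal.span {(p : ℤ)}) _ Gal(K/ℚ),
    ← Ideal.ncard_primesOver_mul_ramificationIdxIn_mul_inertiaDegIn (Ideal.span {(p : ℤ)}) (𝓞 K)]
  exact (dvd_mul_right _ _).mul_left _

theorem exists_heightOneSpectrum_liesOver (K : Type*) [Field K] [NumberField K] {p : ℕ}
    (hp : p.Prime) : ∃ w : HeightOneSpectrum (𝓞 K), w.asIdeal.LiesOver (Ideal.span {(p : ℤ)}) := by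
  have : (Ideal.span {(p : ℤ)}).IsPrime :=
    (Ideal.span_singleton_prime (mod_cast hp.ne_zero)).mpr (Nat.prime_iff_prime_int.mp hp)
  obtain ⟨Q, hQ, hover⟩ := (inferInstance : Nonempty ((Ideal.span {(p : ℤ)}).primesOver (𝓞 K)))
  refine ⟨⟨Q, hQ, Ideal.ne_bot_of_liesOver_of_ne_bot (p := Ideal.span {(p : ℤ)}) ?_ Q⟩, hover⟩
  simpa only [ne_eq, Ideal.span_singleton_eq_bot, Nat.cast_eq_zero] using hp.ne_zero

theorem exists_absoluteValue_apply_prime_eq_pow (K : Type*) [Field K] [NumberField K]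
    [IsGalois ℚ K] {p : ℕ} (hp : p.Prime) :
    ∃ (v : AbsoluteValue K ℝ) (π : ℝ) (e : ℕ), IsNonarchimedean v ∧ 0 < π ∧ π < 1 ∧
      (∀ x ≠ 0, ∃ k : ℤ, v x = π ^ k) ∧ v p < 1 ∧ v p = π ^ e ∧ e ∣ Nat.card Gal(K/ℚ) := by
  obtain ⟨w, hw⟩ := exists_heightOneSpectrum_liesOver K hp
  have hb : (1 : NNReal) < 2 := one_lt_two
  have hmem : (p : 𝓞 K) ∈ w.asIdeal := by
    have hle := Ideal.map_le_of_le_comap hw.over.le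
    rw [Ideal.map_span, Set.image_singleton, map_natCast] at hle
    exact hle (Ideal.mem_span_singleton_self _)
  refine ⟨w.adicAbv hb, _, _, w.isNonarchimedean_adicAbv hb, by positivity, ?_,
    exists_adicAbv_eq_zpow w hb, ?_, ?_, multiplicity_dvd_card_gal hp w⟩
  · exact inv_lt_one_of_one_lt₀ hb
  · simpa only [map_natCast] using (w.adicAbv_coe_lt_one_iff hb (K := K) _).mpr hmem
  · simpa only [map_natCast] using
      adicAbv_algebraMap_eq_pow w hb (K := K) (r := (p : 𝓞 K)) (mod_cast hp.ne_zero)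

theorem IsPadicSegment.dvd_card_gal {K : Type*} [Field K] [NumberField K] [IsGalois ℚ K]
    {p h m a b : ℕ} {c : ℕ → ℤ} (hc : IsPadicSegment p h m c a b) (hp : p.Prime) (hm : m ≠ 0)
    (hhm : h.Coprime m) (hab : a < b) {f : K[X]} (hf : f.Splits) (hfc : ∀ i, f.coeff i = c i) :
    m ∣ Nat.card Gal(K/ℚ) := by
  rcases eq_or_ne h 0 with rfl | hh
  · exact (Nat.coprime_zero_left m).mp hhm ▸ one_dvd _
  obtain ⟨v, π, e, hv, hπ0, hπ1, hπ, hvp, hve, he⟩ := exists_absoluteValue_apply_prime_eq_pow K hp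
  have hv0 : 0 < v p := v.pos (mod_cast hp.ne_zero)
  obtain ⟨ρ, hρ0, hρ⟩ := exists_pos_pow_eq (pow_pos hv0 h) hm
  have hseg := hc.isNewtonSegment hv hp hv0 hvp hh hm hρ0 hρ hfc
  obtain ⟨r, -, hr⟩ := hseg.exists_mem_roots hv hρ0 hf hab
  obtain ⟨k, hk⟩ := hπ r (v.pos_iff.mp (hr ▸ hρ0))
  have hexp : k * m = (e * h : ℕ) := by
    apply zpow_right_injective₀ hπ0 hπ1.ne
    dsimp only
    rw [zpow_mul, ← hk, hr, zpow_natCast, hρ, hve, ← pow_mul, zpow_natCast]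
  refine (hhm.symm.dvd_of_dvd_mul_right ?_).trans he
  exact Int.natCast_dvd_natCast.mp ⟨k, by rw [← hexp, mul_comm]⟩

section Resultant

variable {R : Type*} [CommRing R] {f g : R[X]} {n : ℕ}

theorem resultant_eq_of_monic (hf : f.Monic) (hg : g.natDegree ≤ n) :
    resultant f g f.natDegree n = resultant f g := by
  obtain ⟨k, rfl⟩ := exists_add_of_le hg
  rw [resultant_add_right_deg _ _ _ _ _ le_rfl, coeff_natDegree, hf.leadingCoeff, one_pow, one_mul]

theorem resultant_X_mul_of_monic (hf : f.Monic) (hg : g.natDegree ≤ n) :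
    resultant f (X * g) f.natDegree (n + 1) =
      (-1) ^ f.natDegree * f.coeff 0 * resultant f g f.natDegree n := by
  have hX : (X : R[X]).natDegree ≤ 1 := natDegree_X_le
  have hXg : (X * g).natDegree ≤ X.natDegree + g.natDegree := natDegree_mul_le
  rw [resultant_eq_of_monic hf (hXg.trans (by omega)), ← resultant_eq_of_monic hf hXg,
    resultant_mul_right f X g _ le_rfl, resultant_eq_of_monic hf hg, ← resultant_eq_of_monic hf hX,
    ← sub_zero X, ← C_0, resultant_X_sub_C_right _ _ _ le_rfl, coeff_zero_eq_eval_zero]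

end Resultant

section ScaledLaguerre

variable {R : Type*} [CommRing R] (a b : R)

/-- The coefficient of `X ^ j` in `scaledLaguerre a b n`. -/
def scaledLaguerreCoeff (n j : ℕ) : R :=
  (-1) ^ (n + j) * n.choose j * ∏ i ∈ Icc (j + 1) n, (a + b * i)

/-- The generalised Laguerre polynomial of degree `n` in the variable `X / b`, with parameter
`α = a / b`, normalised to be monic. Both parameters are kept so that the polynomial has integral
coefficients when `α` is rational. -/
noncomputable def scaledLaguerre (n : ℕ) : R[X] :=
  ∑ j ∈ range (n + 1), C (scaledLaguerreCoeff a b n j) * X ^ j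

theorem scaledLaguerreCoeff_of_lt {n j : ℕ} (h : n < j) : scaledLaguerreCoeff a b n j = 0 := by
  rw [scaledLaguerreCoeff, Nat.choose_eq_zero_of_lt h, Nat.cast_zero, mul_zero, zero_mul]

theorem scaledLaguerreCoeff_self (n : ℕ) : scaledLaguerreCoeff a b n n = 1 := by
  simp [scaledLaguerreCoeff, ← two_mul]

theorem scaledLaguerreCoeff_succ_of_le {n j : ℕ} (h : j ≤ n) : scaledLaguerreCoeff a b (n + 1) j =
    -((-1) ^ (n + j) * (n + 1).choose j * ((∏ i ∈ Icc (j + 1) n, (a + b * i)) *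
      (a + b * (n + 1)))) := by
  rw [scaledLaguerreCoeff, prod_Icc_succ_top (by omega), Nat.cast_add_one]
  ring

theorem mul_scaledLaguerreCoeff_succ (n j : ℕ) : j * scaledLaguerreCoeff a b (n + 1) j =
    (n + 1) * scaledLaguerreCoeff a b (n + 1) j +
      (n + 1) * (a + b * (n + 1)) * scaledLaguerreCoeff a b n j := by
  rcases le_or_gt j n with h | h
  · have hchoose : ((n + 1).choose j * (n + 1 - j) : R) = n.choose j * (n + 1) := by
      have := congrArg (Nat.cast (R := R)) (Nat.choose_mul_succ_eq n j)
      push_cast [Nat.cast_sub (show j ≤ n + 1 by omega)] at this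
      exact this.symm
    rw [scaledLaguerreCoeff_succ_of_le a b h, scaledLaguerreCoeff]
    linear_combination (-1) ^ (n + j) * (∏ i ∈ Icc (j + 1) n, (a + b * i)) * (a + b * (n + 1)) *
      hchoose
  · rw [scaledLaguerreCoeff_of_lt a b h]
    rcases (Nat.succ_le_of_lt h).eq_or_lt with rfl | h
    · push_cast; ring
    · rw [scaledLaguerreCoeff_of_lt a b h]; ring

theorem scaledLaguerreCoeff_succ_zero (n : ℕ) :
    scaledLaguerreCoeff a b (n + 1) 0 = -(a + b * (n + 1)) * scaledLaguerreCoeff a b n 0 := by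
  rw [scaledLaguerreCoeff_succ_of_le a b n.zero_le, scaledLaguerreCoeff, Nat.choose_zero_right,
    Nat.choose_zero_right]
  ring

theorem scaledLaguerreCoeff_zero (n : ℕ) :
    scaledLaguerreCoeff a b n 0 = (-1) ^ n * ∏ j ∈ range n, (a + b * (j + 1)) := by
  induction n with
  | zero => rw [scaledLaguerreCoeff_self, pow_zero, prod_range_zero, one_mul]
  | succ n ih => rw [scaledLaguerreCoeff_succ_zero, ih, prod_range_succ]; ring

theorem scaledLaguerreCoeff_succ_succ (n j : ℕ) : scaledLaguerreCoeff a b (n + 1) (j + 1) =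
    scaledLaguerreCoeff a b n j -
      (a + b * (n + 1) + b * (j + 1)) * scaledLaguerreCoeff a b n (j + 1) := by
  rcases lt_trichotomy j n with h | rfl | h
  · have hsum : ((n + 1).choose (j + 1) : R) = n.choose j + n.choose (j + 1) := by
      rw [Nat.choose_succ_succ, Nat.cast_add]
    have hmul : (n.choose (j + 1) * (j + 1) : R) = n.choose j * (n - j) := by
      have := congrArg (Nat.cast (R := R)) (Nat.choose_succ_right_eq n j)
      push_cast [Nat.cast_sub h.le] at this
      exact this
    have hprod : ∏ i ∈ Icc (j + 1) n, (a + b * i) =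
        (a + b * (j + 1)) * ∏ i ∈ Icc (j + 1 + 1) n, (a + b * i) := by
      rw [Icc_add_one_left_eq_Ioc (j + 1), ← Nat.cast_add_one,
        mul_prod_Ioc_eq_prod_Icc (f := fun i : ℕ ↦ a + b * i) (Nat.succ_le_of_lt h)]
    rw [scaledLaguerreCoeff_succ_of_le a b (Nat.succ_le_of_lt h), scaledLaguerreCoeff,
      scaledLaguerreCoeff, Nat.succ_eq_add_one, hsum, hprod]
    linear_combination (-1) ^ (n + j) * (∏ i ∈ Icc (j + 1 + 1) n, (a + b * i)) * -b * hmul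
  · rw [scaledLaguerreCoeff_self, scaledLaguerreCoeff_self,
      scaledLaguerreCoeff_of_lt a b j.lt_succ_self, mul_zero, sub_zero]
  · rw [scaledLaguerreCoeff_of_lt a b h, scaledLaguerreCoeff_of_lt a b (h.trans j.lt_succ_self),
      scaledLaguerreCoeff_of_lt a b (Nat.succ_lt_succ h), mul_zero, sub_zero]

theorem coeff_scaledLaguerre (n j : ℕ) :
    (scaledLaguerre a b n).coeff j = scaledLaguerreCoeff a b n j := by
  simp only [scaledLaguerre, finsetSum_coeff, coeff_C_mul, coeff_X_pow, mul_ite, mul_one, mul_zero,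
    sum_ite_eq, mem_range]
  split_ifs with h
  · rfl
  · exact (scaledLaguerreCoeff_of_lt a b (by omega)).symm

theorem natDegree_scaledLaguerre_le (n : ℕ) : (scaledLaguerre a b n).natDegree ≤ n :=
  natDegree_le_iff_coeff_eq_zero.mpr fun j hj ↦ by
    rw [coeff_scaledLaguerre, scaledLaguerreCoeff_of_lt a b hj]

theorem monic_scaledLaguerre (n : ℕ) : (scaledLaguerre a b n).Monic :=
  monic_of_natDegree_le_of_coeff_eq_one n (natDegree_scaledLaguerre_le a b n)
    (by rw [coeff_scaledLaguerre, scaledLaguerreCoeff_self])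

theorem natDegree_scaledLaguerre [Nontrivial R] (n : ℕ) : (scaledLaguerre a b n).natDegree = n :=
  natDegree_eq_of_le_of_coeff_ne_zero (natDegree_scaledLaguerre_le a b n)
    (by rw [coeff_scaledLaguerre, scaledLaguerreCoeff_self]; exact one_ne_zero)

theorem eval_scaledLaguerre (n : ℕ) (x : R) :
    (scaledLaguerre a b n).eval x = ∑ j ∈ range (n + 1), scaledLaguerreCoeff a b n j * x ^ j := by
  simp only [scaledLaguerre, eval_finsetSum, eval_C_mul, eval_X_pow]

theorem coeff_X_mul_derivative (f : R[X]) (j : ℕ) :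
    (X * derivative f).coeff j = j * f.coeff j := by
  cases j with
  | zero => simp
  | succ j => rw [coeff_X_mul, coeff_derivative, Nat.cast_add_one, mul_comm]

theorem X_mul_derivative_scaledLaguerre_succ (n : ℕ) :
    X * derivative (scaledLaguerre a b (n + 1)) =
      C (n + 1 : R) * scaledLaguerre a b (n + 1) +
        C ((n + 1) * (a + b * (n + 1))) * scaledLaguerre a b n := by
  ext j
  simp only [coeff_X_mul_derivative, coeff_add, coeff_C_mul, coeff_scaledLaguerre]
  exact mul_scaledLaguerreCoeff_succ a b n j

theorem scaledLaguerre_succ (n : ℕ) : scaledLaguerre a b (n + 1) =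
    (X - C (a + b * (n + 1))) * scaledLaguerre a b n -
      C b * (X * derivative (scaledLaguerre a b n)) := by
  ext j
  rw [sub_mul, coeff_sub, coeff_sub, coeff_C_mul, coeff_C_mul, coeff_X_mul_derivative]
  simp only [coeff_scaledLaguerre]
  cases j with
  | zero =>
    rw [coeff_X_mul_zero, scaledLaguerreCoeff_succ_zero, Nat.cast_zero]
    ring
  | succ j =>
    rw [coeff_X_mul, coeff_scaledLaguerre, scaledLaguerreCoeff_succ_succ, Nat.cast_add_one]
    ring

theorem scaledLaguerre_add_two (n : ℕ) : scaledLaguerre a b (n + 2) =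
    C (-(b * (n + 1) * (a + b * (n + 1)))) * scaledLaguerre a b n +
      scaledLaguerre a b (n + 1) * (X - C (a + b * (2 * n + 3))) := by
  rw [scaledLaguerre_succ a b (n + 1), X_mul_derivative_scaledLaguerre_succ]
  simp only [map_neg, map_mul, map_add, map_one, map_natCast, map_ofNat, Nat.cast_add_one]
  ring

theorem resultant_scaledLaguerre_succ [Nontrivial R] (n : ℕ) :
    resultant (scaledLaguerre a b (n + 1)) (scaledLaguerre a b n) (n + 1) n =
      ∏ j ∈ range n, (-(b * (j + 1) * (a + b * (j + 1)))) ^ (j + 1) := by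
  induction n with
  | zero => rw [resultant_zero_right_deg, coeff_scaledLaguerre, scaledLaguerreCoeff_self, one_pow,
      prod_range_zero]
  | succ n ih =>
    have hdeg : (X - C (a + b * (2 * n + 3))).natDegree = 1 := natDegree_X_sub_C _
    rw [scaledLaguerre_add_two, resultant_add_mul_left _ _ _ _ _ (by omega)
      (natDegree_scaledLaguerre_le a b _), resultant_C_mul_left,
      show n + 1 + 1 = n + 2 from rfl,
      resultant_add_left_deg _ _ _ _ _ (natDegree_scaledLaguerre_le a b n), resultant_comm, ih,
      coeff_scaledLaguerre, scaledLaguerreCoeff_self, (Nat.even_mul_succ_self n).neg_one_pow,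
      pow_mul', neg_one_sq, prod_range_succ]
    ring

theorem resultant_derivative_scaledLaguerre_succ [Nontrivial R] (n : ℕ) :
    (∏ j ∈ range (n + 1), (a + b * (j + 1))) *
      resultant (scaledLaguerre a b (n + 1)) (derivative (scaledLaguerre a b (n + 1))) (n + 1) n =
    ((n + 1) * (a + b * (n + 1))) ^ (n + 1) *
      ∏ j ∈ range n, (-(b * (j + 1) * (a + b * (j + 1)))) ^ (j + 1) := by
  have hdeg := natDegree_scaledLaguerre a b (n + 1)
  have hderiv : (derivative (scaledLaguerre a b (n + 1))).natDegree ≤ n :=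
    (natDegree_derivative_le _).trans (by rw [hdeg, Nat.add_sub_cancel])
  have hX := resultant_X_mul_of_monic (monic_scaledLaguerre a b (n + 1)) hderiv
  rw [hdeg, coeff_scaledLaguerre, scaledLaguerreCoeff_zero, ← mul_assoc, ← mul_pow, neg_one_mul,
    neg_neg, one_pow, one_mul] at hX
  rw [← hX, X_mul_derivative_scaledLaguerre_succ, add_comm (C (n + 1 : R) * _),
    mul_comm (C (n + 1 : R)),
    resultant_add_mul_right _ _ _ _ _ (by rw [natDegree_C]; omega) hdeg.le, resultant_C_mul_right,
    resultant_add_right_deg _ _ _ _ _ (natDegree_scaledLaguerre_le a b _),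
    resultant_scaledLaguerre_succ, coeff_scaledLaguerre, scaledLaguerreCoeff_self, one_pow, one_mul]

theorem prod_scaledLaguerre_recurrence_coeff (n : ℕ) :
    ((n + 1) * (a + b * (n + 1))) ^ (n + 1) *
        ∏ j ∈ range n, (-(b * (j + 1) * (a + b * (j + 1)))) ^ (j + 1) =
      (∏ j ∈ range (n + 1), (a + b * (j + 1))) * ((-1) ^ ((n + 1) * n / 2) *
        ∏ j ∈ range (n + 1), (j + 1 : R) ^ (j + 1) * (b * (a + b * (j + 1))) ^ j) := by
  rw [show (n + 1) * n / 2 = ∑ i ∈ range (n + 1), i by rw [sum_range_id, Nat.add_sub_cancel],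
    ← prod_pow_eq_pow_sum, ← prod_mul_distrib, ← prod_mul_distrib]
  calc
    _ = (∏ j ∈ range (n + 1), ((j + 1) * (a + b * (j + 1))) ^ (j + 1)) *
        ∏ j ∈ range (n + 1), (-b) ^ j := by
      rw [prod_range_succ, prod_range_succ' (fun j ↦ (-b) ^ j), pow_zero, mul_one, mul_right_comm,
        ← prod_mul_distrib, mul_comm]
      congr 1
      exact prod_congr rfl fun j _ ↦ by rw [← mul_pow]; ring
    _ = _ := by
      rw [← prod_mul_distrib]
      exact prod_congr rfl fun j _ ↦ by rw [neg_pow, mul_pow, mul_pow b]; ring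

theorem discr_scaledLaguerre [IsDomain R] {n : ℕ} (h : ∀ j < n, a + b * (j + 1) ≠ 0) :
    discr (scaledLaguerre a b n) =
      ∏ j ∈ range n, (j + 1 : R) ^ (j + 1) * (b * (a + b * (j + 1))) ^ j := by
  cases n with
  | zero => rw [scaledLaguerre, sum_range_one, pow_zero, mul_one, discr_C, prod_range_zero]
  | succ n =>
    have hdeg := natDegree_scaledLaguerre a b (n + 1)
    have hderiv := resultant_deriv (f := scaledLaguerre a b (n + 1))
      (natDegree_pos_iff_degree_pos.mp (by omega))
    rw [hdeg, Nat.add_sub_cancel, (monic_scaledLaguerre a b _).leadingCoeff, mul_one] at hderiv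
    have hres := resultant_derivative_scaledLaguerre_succ a b n
    rw [hderiv, prod_scaledLaguerre_recurrence_coeff] at hres
    exact mul_left_cancel₀ (pow_ne_zero _ (neg_ne_zero.mpr one_ne_zero))
      (mul_left_cancel₀ (prod_ne_zero_iff.mpr fun j hj ↦ h j (mem_range.mp hj)) hres)

end ScaledLaguerre

section Discriminant

variable {R : Type*} [CommRing R]

theorem discr_map_of_monic {S : Type*} [CommRing S] [Nontrivial S] (φ : R →+* S) {f : R[X]}
    (hf : f.Monic) : (f.map φ).discr = φ f.discr := by
  have : Nontrivial R := φ.domain_nontrivial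
  rcases Nat.eq_zero_or_pos f.natDegree with h0 | hpos
  · rw [hf.natDegree_eq_zero.mp h0, Polynomial.map_one, ← C_1, ← C_1, discr_C, discr_C, map_one]
  · have hdeg := hf.natDegree_map φ
    have hmap := resultant_deriv (natDegree_pos_iff_degree_pos.mp (hdeg.symm ▸ hpos))
    rw [derivative_map, hdeg, resultant_map_map, (hf.map φ).leadingCoeff,
      resultant_deriv (natDegree_pos_iff_degree_pos.mp hpos), hf.leadingCoeff, mul_one, mul_one,
      map_mul, map_pow, map_neg, map_one] at hmap
    exact ((isUnit_neg_one.pow _).mul_left_cancel hmap).symm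

theorem eval_derivative_prod_X_sub_C {ι : Type*} [Fintype ι] [DecidableEq ι] (r : ι → R) (i : ι) :
    (derivative (∏ j, (X - C (r j)))).eval (r i) = ∏ j ∈ {i}ᶜ, (r i - r j) := by
  rw [derivative_prod_finset, eval_finsetSum, sum_eq_single i]
  · simp [eval_prod, compl_singleton]
  · intro j _ hj
    rw [derivative_X_sub_C, mul_one, eval_prod]
    exact prod_eq_zero (mem_erase.mpr ⟨hj.symm, mem_univ i⟩) (by simp)
  · exact fun h ↦ absurd (mem_univ i) h

theorem prod_prod_sub_eq_det_vandermonde_sq {n : ℕ} (r : Fin n → R) :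
    ∏ i, ∏ j ∈ {i}ᶜ, (r i - r j) =
      (-1) ^ (n * (n - 1) / 2) * (Matrix.vandermonde r).det ^ 2 := by
  have hcard : ∑ i : Fin n, #(Ioi i) = n * (n - 1) / 2 := by
    simp only [Fin.card_Ioi]
    rw [Fin.sum_univ_eq_sum_range (fun i ↦ n - 1 - i) n, sum_range_reflect (fun i ↦ i) n,
      sum_range_id]
  have hpair (i : Fin n) : ∏ j ∈ Ioi i, ((r i - r j) * (r j - r i)) =
      (-1) ^ #(Ioi i) * (∏ j ∈ Ioi i, (r j - r i)) ^ 2 := by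
    rw [← prod_pow, ← prod_const, ← prod_mul_distrib]
    exact prod_congr rfl fun j _ ↦ by ring
  rw [← prod_prod_Ioi_mul_eq_prod_prod_off_diag fun j i ↦ r i - r j,
    prod_congr rfl fun i _ ↦ hpair i, prod_mul_distrib, prod_pow, prod_pow_eq_pow_sum, hcard,
    Matrix.det_vandermonde]

theorem discr_prod_X_sub_C [IsDomain R] {n : ℕ} (r : Fin n → R) :
    (∏ i, (X - C (r i))).discr = (Matrix.vandermonde r).det ^ 2 := by
  rcases Nat.eq_zero_or_pos n with rfl | hpos
  · rw [univ_eq_empty, prod_empty, ← C_1, discr_C, Matrix.det_isEmpty, one_pow]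
  set f : R[X] := ∏ i, (X - C (r i)) with hf
  have hdeg : f.natDegree = n := by rw [hf, natDegree_finsetProd_X_sub_C_eq_card, card_fin]
  have hmonic : f.Monic := monic_prod_X_sub_C r univ
  have hres := resultant_deriv (f := f) (natDegree_pos_iff_degree_pos.mp (hdeg.symm ▸ hpos))
  have hprod := resultant_prod_left univ (fun i ↦ X - C (r i)) (derivative f) (n - 1)
    (by simp) ((natDegree_derivative_le f).trans (by rw [hdeg]))
  have heval (i : Fin n) : resultant (X - C (r i)) (derivative f) (X - C (r i)).natDegree (n - 1) =
      ∏ j ∈ {i}ᶜ, (r i - r j) := by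
    rw [natDegree_X_sub_C, resultant_X_sub_C_left _ _ _ ((natDegree_derivative_le f).trans
      (by rw [hdeg])), hf, eval_derivative_prod_X_sub_C]
  rw [← hf, prod_congr rfl fun i _ ↦ heval i, prod_prod_sub_eq_det_vandermonde_sq] at hprod
  rw [hmonic.leadingCoeff, mul_one, hdeg] at hres
  rw [hdeg, hres] at hprod
  exact (isUnit_neg_one.pow _).mul_left_cancel hprod

end Discriminant

section GaloisGroup

variable {F K : Type*} [Field F] [Field K] [Algebra F K]

theorem sign_eq_one_of_det_vandermonde_sq [NeZero (2 : F)] {n : ℕ} {r : Fin n → K}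
    (hr : Function.Injective r) {c : F}
    (hc : (Matrix.vandermonde r).det ^ 2 = algebraMap F K c ^ 2) (σ : K ≃ₐ[F] K)
    (π : Equiv.Perm (Fin n)) (hπ : ∀ i, r (π i) = σ (r i)) : Equiv.Perm.sign π = 1 := by
  have hdet : (Matrix.vandermonde r).det ≠ 0 := Matrix.det_vandermonde_ne_zero_iff.mpr hr
  have hfix : σ (Matrix.vandermonde r).det = (Matrix.vandermonde r).det := by
    rcases sq_eq_sq_iff_eq_or_eq_neg.mp hc with h | h <;> simp only [h, map_neg, AlgEquiv.commutes]
  have hperm : σ (Matrix.vandermonde r).det =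
      (Equiv.Perm.sign π : ℤ) * (Matrix.vandermonde r).det := by
    rw [← Matrix.det_permute, AlgEquiv.map_det]
    congr 1
    ext i j
    simp [Matrix.vandermonde_apply, hπ]
  have htwo : (2 : K) ≠ 0 := by
    simpa only [map_ofNat] using (map_ne_zero (algebraMap F K)).mpr (two_ne_zero' F)
  refine (Int.units_eq_one_or _).resolve_right fun h ↦ ?_
  rw [hfix, h, Units.val_neg, Units.val_one, Int.cast_neg, Int.cast_one, neg_one_mul,
    eq_neg_iff_add_eq_zero, ← two_mul] at hperm
  exact mul_ne_zero htwo hdet hperm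

theorem map_eq_prod_rootSet {f : F[X]} (hmonic : f.Monic) (hsep : f.Separable)
    (hsplit : (f.map (algebraMap F K)).Splits) :
    f.map (algebraMap F K) = ∏ x : f.rootSet K, (X - C (x : K)) := by
  classical
  have hval : (f.aroots K).toFinset.val = f.aroots K := by
    rw [Multiset.toFinset_val, (nodup_roots hsep.map).dedup]
  calc
    f.map (algebraMap F K) = ((f.aroots K).map (X - C ·)).prod :=
      hsplit.eq_prod_roots_of_monic (hmonic.map _)
    _ = ∏ x ∈ (f.aroots K).toFinset, (X - C x) := by rw [prod_eq_multiset_prod, hval]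
    _ = _ := prod_subtype _ (fun x ↦ by rw [rootSet, mem_coe]) _

theorem sign_galActionHom_eq_one [NeZero (2 : F)] [Normal F K] {f : F[X]} (hmonic : f.Monic)
    (hsep : f.Separable) [hsplit : Fact (f.map (algebraMap F K)).Splits]
    [DecidableEq (f.rootSet K)] (hdiscr : IsSquare f.discr) (σ : f.Gal) :
    Equiv.Perm.sign (Gal.galActionHom f K σ) = 1 := by
  obtain ⟨σ, rfl⟩ := Gal.restrict_surjective f K σ
  obtain ⟨c, hc⟩ := hdiscr
  let e : Fin f.natDegree ≃ f.rootSet K :=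
    (Fintype.equivFinOfCardEq (card_rootSet_eq_natDegree hsep hsplit.out)).symm
  have hprod : f.map (algebraMap F K) = ∏ i, (X - C (e i : K)) := by
    rw [map_eq_prod_rootSet hmonic hsep hsplit.out]
    exact (e.prod_comp _).symm
  rw [← Equiv.Perm.sign_permCongr e.symm]
  refine sign_eq_one_of_det_vandermonde_sq (Subtype.val_injective.comp e.injective) (c := c) ?_ σ _
    fun i ↦ ?_
  · rw [Function.comp_def, ← discr_prod_X_sub_C, ← hprod, discr_map_of_monic _ hmonic, hc,
      map_mul, sq]
  · simp [Gal.galActionHom_restrict]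

theorem nonempty_gal_mulEquiv_alternatingGroup [CharZero F] {f : F[X]} (hmonic : f.Monic)
    (hirr : Irreducible f) (hdiscr : IsSquare f.discr) {q : ℕ} (hq : q.Prime)
    (hdvd : q ∣ Nat.card f.Gal) (hlt : f.natDegree < 2 * q) (hle : q + 3 ≤ f.natDegree) :
    Nonempty (f.Gal ≃* alternatingGroup (Fin f.natDegree)) := by
  classical
  let E := AlgebraicClosure F
  have hsplit : Fact (f.map (algebraMap F E)).Splits := ⟨IsAlgClosed.splits _⟩
  have hcard : Fintype.card (f.rootSet E) = f.natDegree :=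
    card_rootSet_eq_natDegree hirr.separable hsplit.out
  have hinj := Gal.galActionHom_injective f E
  have htrans : MulAction.IsPretransitive (Gal.galActionHom f E).range (f.rootSet E) := by
    have := Gal.galAction_isPretransitive f E hirr
    refine ⟨fun x y ↦ ?_⟩
    obtain ⟨σ, hσ⟩ := MulAction.exists_smul_eq f.Gal x y
    exact ⟨⟨_, σ, rfl⟩, hσ⟩
  have hrange : (Gal.galActionHom f E).range = alternatingGroup (f.rootSet E) := by
    refine le_antisymm ?_ ?_
    · rintro _ ⟨σ, rfl⟩
      exact sign_galActionHom_eq_one (K := E) hmonic hirr.separable hdiscr σ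
    · refine alternatingGroup_le_of_prime_dvd_card hq ?_ (hcard ▸ hlt) (hcard ▸ hle)
      rwa [← Nat.card_congr (MonoidHom.ofInjective hinj).toEquiv]
  exact ⟨((MonoidHom.ofInjective hinj).trans (MulEquiv.subgroupCongr hrange)).trans
    (Equiv.altCongrHom (Fintype.equivFinOfCardEq hcard))⟩

end GaloisGroup

section LinearSubstitution

variable {F : Type*} [Field F] {f : F[X]} {c s : F}

theorem irreducible_C_mul_comp_C_mul_X (hf : Irreducible f) (hc : c ≠ 0) (hs : s ≠ 0) :
    Irreducible (C c * f.comp (C s * X)) := by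
  rw [irreducible_isUnit_mul (isUnit_C.mpr hc.isUnit)]
  let _ : Invertible s := invertibleOfNonzero hs
  have hequiv : algEquivCMulXAddC s 0 f = f.comp (C s * X) := by
    rw [algEquivCMulXAddC_apply, C_0, add_zero, comp, aeval_def, algebraMap_eq]
  exact hequiv ▸ (MulEquiv.irreducible_iff (algEquivCMulXAddC s 0)).mpr hf

theorem isSplittingField_C_mul_comp_C_mul_X (E : Type*) [Field E] [Algebra F E]
    [hE : IsSplittingField F E f] (hc : c ≠ 0) (hs : s ≠ 0) :
    IsSplittingField F E (C c * f.comp (C s * X)) where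
  splits' := by
    rw [Polynomial.map_mul, map_C, map_comp, Polynomial.map_mul, map_C, map_X]
    have hdeg := (natDegree_C_mul_le (algebraMap F E s) X).trans natDegree_X_le
    exact (hE.splits'.comp_of_natDegree_le_one hdeg).C_mul _
  adjoin_rootSet' := by
    rw [eq_top_iff, ← hE.adjoin_rootSet', Algebra.adjoin_le_iff]
    intro x hx
    obtain ⟨hf, hx⟩ := mem_rootSet'.mp hx
    have hroot : s⁻¹ • x ∈ (C c * f.comp (C s * X)).rootSet E := by
      refine mem_rootSet'.mpr ⟨?_, ?_⟩
      · have hs' := mem_nonZeroDivisors_of_ne_zero hs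
        have hf' := (Polynomial.map_ne_zero_iff (algebraMap F E).injective).mp hf
        exact map_ne_zero (mul_ne_zero (C_ne_zero.mpr hc)
          ((comp_C_mul_X_eq_zero_iff hs').not.mpr hf'))
      · rw [map_mul, aeval_comp, map_mul, aeval_C, aeval_C, aeval_X, ← Algebra.smul_def s,
          smul_inv_smul₀ hs, hx, mul_zero]
    rw [← smul_inv_smul₀ hs x]
    exact Subalgebra.smul_mem _ (Algebra.subset_adjoin hroot) s

theorem nonempty_gal_C_mul_comp_C_mul_X_mulEquiv (hc : c ≠ 0) (hs : s ≠ 0) :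
    Nonempty ((C c * f.comp (C s * X)).Gal ≃* f.Gal) := by
  have := isSplittingField_C_mul_comp_C_mul_X f.SplittingField (f := f) hc hs
  exact ⟨(IsSplittingField.algEquiv f.SplittingField (C c * f.comp (C s * X))).symm.autCongr⟩

end LinearSubstitution

theorem prod_half_add_eq_div {n j : ℕ} (hj : j ≤ n) (u : ℤ) :
    ∏ i ∈ Icc (j + 1) n, ((u : ℚ) + 1 / 2 + i) =
      (∏ i ∈ Icc (j + 1) n, (2 * u + 1 + 2 * (i : ℚ))) / 2 ^ (n - j) := by
  have hcard : #(Icc (j + 1) n) = n - j := by rw [Nat.card_Icc]; omega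
  rw [eq_div_iff (by positivity), ← hcard, ← prod_const, ← prod_mul_distrib]
  exact prod_congr rfl fun i _ ↦ by ring

theorem laguerre_eq_scaledLaguerre (n : ℕ) (u : ℤ) : laguerre n u =
    C ((2 ^ n * n.factorial : ℚ)⁻¹) *
      ((scaledLaguerre (2 * u + 1) 2 n).map (Int.castRingHom ℚ)).comp (C 2 * X) := by
  rw [laguerre, scaledLaguerre, Polynomial.map_sum, Polynomial.sum_comp, smul_sum, mul_sum]
  refine sum_congr rfl fun j hj ↦ ?_
  have hjn : j ≤ n := mem_range_succ_iff.mp hj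
  have hpow : (2 : ℚ) ^ n = 2 ^ (n - j) * 2 ^ j := by rw [← pow_add, Nat.sub_add_cancel hjn]
  have hcoeff : (-1 : ℚ) ^ n * (((∏ i ∈ Icc (j + 1) n, ((u : ℚ) + 1 / 2 + i)) /
      ((n - j).factorial * j.factorial)) * (-1) ^ j) =
      (2 ^ n * n.factorial : ℚ)⁻¹ * ((scaledLaguerreCoeff (2 * u + 1) 2 n j : ℤ) * 2 ^ j) := by
    rw [prod_half_add_eq_div hjn, scaledLaguerreCoeff, hpow]
    push_cast [Nat.cast_choose ℚ hjn]
    have : (n.factorial : ℚ) ≠ 0 := by positivity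
    field_simp
    ring
  calc
    _ = C ((-1 : ℚ) ^ n * (((∏ i ∈ Icc (j + 1) n, ((u : ℚ) + 1 / 2 + i)) /
        ((n - j).factorial * j.factorial)) * (-1) ^ j)) * X ^ j := by
      rw [smul_eq_C_mul, neg_pow (X : ℚ[X])]
      simp only [C_mul, C_pow, C_neg, C_1, mul_assoc]
    _ = _ := by
      rw [hcoeff]
      simp [mul_pow, mul_assoc]

section Certificate

theorem IsPadicSegment.dvd_card_polynomial_gal {p h m a b : ℕ} {c : ℕ → ℤ}
    (hc : IsPadicSegment p h m c a b) (hp : p.Prime) (hm : m ≠ 0) (hhm : h.Coprime m)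
    (hab : a < b) {f : ℚ[X]} (hf : f.Separable) (hfc : ∀ i, f.coeff i = c i) :
    m ∣ Nat.card f.Gal := by
  have : IsSplittingField ℚ f.SplittingField f := IsSplittingField.splittingField f
  have : IsGalois ℚ f.SplittingField := IsGalois.of_separable_splitting_field hf
  have : NumberField f.SplittingField := { }
  exact hc.dvd_card_gal (K := f.SplittingField) hp hm hhm hab (SplittingField.splits f)
    fun i ↦ by rw [coeff_map, hfc, map_intCast]

/-- A prime `p`, a slope `h / m` and indices `a`, `b`, as in `IsPadicSegment`. -/
structure PadicSegment where
  p : ℕ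
  h : ℕ
  m : ℕ
  a : ℕ
  b : ℕ

/-- Being a segment of the `p`-adic Newton polygon of the sequence `c`, of slope in lowest
terms. -/
def PadicSegment.IsPrimitive (s : PadicSegment) (c : ℕ → ℤ) : Prop :=
  s.p.Prime ∧ s.h.Coprime s.m ∧ IsPadicSegment s.p s.h s.m c s.a s.b

instance (s : PadicSegment) (c : ℕ → ℤ) : Decidable (s.IsPrimitive c) :=
  inferInstanceAs (Decidable (_ ∧ _))

/-- Numerical data from which the irreducibility of `laguerre n u` and its Galois group can be
read off: segments that exclude factors of degree at least two, a modulus for which there is no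
root, and a segment of prime denominator that forces ramification. -/
structure LaguerreCertificate (n : ℕ) (u : ℤ) where
  segments : List PadicSegment
  modulus : ℕ
  ramified : PadicSegment
  isPrimitive_of_mem : ∀ s ∈ segments, s.IsPrimitive (scaledLaguerreCoeff (2 * u + 1) 2 n) := by
    decide +kernel
  exists_segment : ∀ d ∈ Icc 2 (n / 2), ∃ s ∈ segments, d < s.m ∧ n < d + (s.b - s.a) := by
    decide +kernel
  modulus_ne_zero : modulus ≠ 0 := by decide +kernel
  not_modulus_dvd : ∀ x : ℕ, x < modulus → ¬(modulus : ℤ) ∣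
    ∑ j ∈ range (n + 1), scaledLaguerreCoeff (2 * u + 1) 2 n j * (x : ℤ) ^ j := by decide +kernel
  isPrimitive_ramified : ramified.IsPrimitive (scaledLaguerreCoeff (2 * u + 1) 2 n) := by
    decide +kernel
  ramified_lt : ramified.a < ramified.b := by decide +kernel
  prime_ramified : ramified.m.Prime := by decide +kernel
  lt_two_mul : n < 2 * ramified.m := by decide +kernel
  add_three_le : ramified.m + 3 ≤ n := by decide +kernel
  isSquare : IsSquare (∏ j ∈ range n,
    (j + 1 : ℤ) ^ (j + 1) * (2 * ((2 * u + 1) + 2 * (j + 1))) ^ j) := by decide +kernel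

namespace LaguerreCertificate

variable {n : ℕ} {u : ℤ}

theorem irreducible_map_scaledLaguerre (cert : LaguerreCertificate n u) :
    Irreducible ((scaledLaguerre (2 * u + 1) 2 n).map (Int.castRingHom ℚ)) := by
  refine irreducible_map_of_isPadicSegment (monic_scaledLaguerre _ _ _) ?_
    (coeff_scaledLaguerre _ _ _) (eval_ne_zero_of_forall_not_dvd cert.modulus_ne_zero ?_) ?_
  · rw [natDegree_scaledLaguerre]
    have := cert.add_three_le
    omega
  · simpa only [eval_scaledLaguerre] using cert.not_modulus_dvd
  · rw [natDegree_scaledLaguerre]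
    intro d hd
    obtain ⟨s, hs, hdm, hlt⟩ := cert.exists_segment d hd
    obtain ⟨hp, hhm, hc⟩ := cert.isPrimitive_of_mem s hs
    exact ⟨s.p, s.h, s.m, s.a, s.b, hp, hhm, hc, hdm, hlt⟩

theorem isSquare_discr (cert : LaguerreCertificate n u) :
    IsSquare ((scaledLaguerre (2 * u + 1) 2 n).map (Int.castRingHom ℚ)).discr := by
  rw [discr_map_of_monic _ (monic_scaledLaguerre _ _ _),
    discr_scaledLaguerre _ _ fun j _ ↦ by omega]
  exact cert.isSquare.map _

theorem irreducible_laguerre (cert : LaguerreCertificate n u) : Irreducible (laguerre n u) := by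
  rw [laguerre_eq_scaledLaguerre]
  exact irreducible_C_mul_comp_C_mul_X cert.irreducible_map_scaledLaguerre (by positivity)
    two_ne_zero

theorem nonempty_gal_laguerre_mulEquiv (cert : LaguerreCertificate n u) :
    Nonempty ((laguerre n u).Gal ≃* alternatingGroup (Fin n)) := by
  have hirr := cert.irreducible_map_scaledLaguerre
  set g := (scaledLaguerre (2 * u + 1) 2 n).map (Int.castRingHom ℚ) with hg
  have hmonic : g.Monic := (monic_scaledLaguerre _ _ _).map _
  have hdeg : g.natDegree = n := by
    rw [hg, (monic_scaledLaguerre _ _ _).natDegree_map, natDegree_scaledLaguerre]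
  obtain ⟨hp, hhm, hc⟩ := cert.isPrimitive_ramified
  have hdvd := hc.dvd_card_polynomial_gal hp cert.prime_ramified.ne_zero hhm cert.ramified_lt
    hirr.separable fun i ↦ by rw [hg, coeff_map, coeff_scaledLaguerre, eq_intCast]
  obtain ⟨e⟩ := nonempty_gal_mulEquiv_alternatingGroup hmonic hirr cert.isSquare_discr
    cert.prime_ramified hdvd (hdeg.symm ▸ cert.lt_two_mul) (hdeg.symm ▸ cert.add_three_le)
  rw [hdeg] at e
  obtain ⟨e'⟩ := nonempty_gal_C_mul_comp_C_mul_X_mulEquiv (f := g)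
    (c := (2 ^ n * n.factorial : ℚ)⁻¹) (by positivity) two_ne_zero
  rw [laguerre_eq_scaledLaguerre]
  exact ⟨e'.trans e⟩

end LaguerreCertificate

theorem nonempty_laguerreCertificate {n : ℕ} {u : ℤ} (h : ((n : ℤ), u) ∈ exceptionalSet) :
    Nonempty (LaguerreCertificate n u) := by
  simp only [exceptionalSet, Set.mem_insert_iff, Set.mem_singleton_iff, Prod.mk.injEq] at h
  norm_cast at h
  rcases h with ⟨rfl, rfl⟩ | ⟨rfl, rfl⟩ | ⟨rfl, rfl⟩ | ⟨rfl, rfl⟩ | ⟨rfl, rfl⟩ | ⟨rfl, rfl⟩ |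
    ⟨rfl, rfl⟩ | ⟨rfl, rfl⟩ | ⟨rfl, rfl⟩ | ⟨rfl, rfl⟩ | ⟨rfl, rfl⟩ | ⟨rfl, rfl⟩
  · exact ⟨{ segments := [⟨7, 1, 7, 1, 8⟩], modulus := 11, ramified := ⟨5, 1, 5, 2, 7⟩ }⟩
  · exact ⟨{ segments := [⟨7, 1, 7, 0, 7⟩], modulus := 17, ramified := ⟨5, 1, 5, 3, 8⟩ }⟩
  · exact ⟨{ segments := [⟨3, 4, 9, 0, 9⟩], modulus := 13, ramified := ⟨5, 1, 5, 2, 7⟩ }⟩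
  · exact ⟨{ segments := [⟨3, 4, 9, 0, 9⟩], modulus := 11, ramified := ⟨5, 1, 5, 3, 8⟩ }⟩
  · exact ⟨{ segments := [⟨13, 1, 13, 2, 15⟩, ⟨5, 1, 5, 1, 16⟩], modulus := 17,
             ramified := ⟨13, 1, 13, 2, 15⟩ }⟩
  · exact ⟨{ segments := [⟨13, 1, 13, 3, 16⟩, ⟨5, 1, 5, 0, 15⟩], modulus := 19,
             ramified := ⟨13, 1, 13, 3, 16⟩ }⟩
  · exact ⟨{ segments := [⟨23, 1, 23, 1, 24⟩], modulus := 29, ramified := ⟨19, 1, 19, 3, 22⟩ }⟩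
  · exact ⟨{ segments := [⟨23, 1, 23, 0, 23⟩], modulus := 31, ramified := ⟨19, 1, 19, 4, 23⟩ }⟩
  · exact ⟨{ segments := [⟨5, 6, 25, 0, 25⟩], modulus := 31, ramified := ⟨19, 1, 19, 3, 22⟩ }⟩
  · exact ⟨{ segments := [⟨5, 6, 25, 0, 25⟩], modulus := 31, ramified := ⟨19, 1, 19, 4, 23⟩ }⟩
  · exact ⟨{ segments := [⟨31, 1, 31, 1, 32⟩], modulus := 37, ramified := ⟨29, 1, 29, 2, 31⟩ }⟩
  · exact ⟨{ segments := [⟨31, 1, 31, 0, 31⟩], modulus := 47, ramified := ⟨29, 1, 29, 3, 32⟩ }⟩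

end Certificate

/-- For `(n, u)` in the exceptional set, the generalised Laguerre polynomial
`L_n^{(u+1/2)}(x)` is irreducible over `ℚ` and its Galois group is the alternating
group on `n` letters. -/
theorem laguerre_irreducible_and_gal_alternating (n : ℕ) (u : ℤ)
    (hE : ((n : ℤ), u) ∈ exceptionalSet) :
    Irreducible (laguerre n u) ∧
      Nonempty ((laguerre n u).Gal ≃* alternatingGroup (Fin n)) := by
  obtain ⟨cert⟩ := nonempty_laguerreCertificate hE
  exact ⟨cert.irreducible_laguerre, cert.nonempty_gal_laguerre_mulEquiv⟩
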